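/- Let r ∈ ℕ and let 𝒞 be a hereditary class of finite simple graphs such that every graph in 𝒞 is an r-bounded perturbation of some interval graph. Then 𝒞 has bounded twin-width if and only if there exist p ≥ 1 and a permutation π of {1,…,p} such that no graph in 𝒞 exposes π. -/

import Mathlib

open Finset

def IsHomog {V : Type} (G : SimpleGraph V) (A B : Finset V) : Prop :=
  (∀ a ∈ A, ∀ b ∈ B, G.Adj a b) ∨ (∀ a ∈ A, ∀ b ∈ B, ¬ G.Adj a b)

noncomputable def redDegree {V : Type} [Fintype V] [DecidableEq V] (G : SimpleGraph V)
    (P : Finpartition (univ : Finset V)) (A : Finset V) : ℕ :=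
  letI := Classical.decPred fun B : Finset V => ¬ IsHomog G A B
  ((P.parts.erase A).filter fun B => ¬ IsHomog G A B).card

def IsMerge {V : Type} [Fintype V] [DecidableEq V]
    (P Q : Finpartition (univ : Finset V)) : Prop :=
  ∃ A ∈ P.parts, ∃ B ∈ P.parts, A ≠ B ∧
    Q.parts = insert (A ∪ B) ((P.parts.erase A).erase B)

def TwinWidthLE {V : Type} [Fintype V] [DecidableEq V] (G : SimpleGraph V) (d : ℕ) : Prop :=
  ∃ L : List (Finpartition (univ : Finset V)),
    (∃ P₀, L.head? = some P₀ ∧ ∀ A ∈ P₀.parts, A.card = 1) ∧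
    (∃ P₁, L.getLast? = some P₁ ∧ P₁.parts.card ≤ 1) ∧
    List.Chain' IsMerge L ∧
    ∀ P ∈ L, ∀ A ∈ P.parts, redDegree G P A ≤ d

/-- `G` is an interval graph: vertices carry closed rational intervals, and
distinct vertices are adjacent iff their intervals intersect. -/
def IsIntervalGraph {n : ℕ} (G : SimpleGraph (Fin n)) : Prop :=
  ∃ l r : Fin n → ℚ, (∀ v, l v ≤ r v) ∧
    ∀ u v : Fin n, u ≠ v →
      (G.Adj u v ↔ max (l u) (l v) ≤ min (r u) (r v))

/-- The graph `H` exposes the permutation `π` of `{0, …, p-1}`: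
its vertex set partitions into `W = range w`, `W₁ = range w₁`, `W₂ = range w₂`
(each of size `p`) such that the neighborhoods of the `w i` in `W₁` are
nonempty and strictly increasing along `i`, and the neighborhoods in `W₂` are
nonempty and strictly increasing along `π`. -/
def Exposes {V : Type} {p : ℕ} (H : SimpleGraph V) (π : Equiv.Perm (Fin p)) : Prop :=
  ∃ w w₁ w₂ : Fin p → V,
    Function.Injective w ∧ Function.Injective w₁ ∧ Function.Injective w₂ ∧
    Disjoint (Set.range w) (Set.range w₁) ∧
    Disjoint (Set.range w) (Set.range w₂) ∧
    Disjoint (Set.range w₁) (Set.range w₂) ∧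
    Set.range w ∪ Set.range w₁ ∪ Set.range w₂ = Set.univ ∧
    (∀ i, (H.neighborSet (w i) ∩ Set.range w₁).Nonempty) ∧
    (∀ i, (H.neighborSet (w i) ∩ Set.range w₂).Nonempty) ∧
    (∀ i j : Fin p, i < j →
      H.neighborSet (w i) ∩ Set.range w₁ ⊂ H.neighborSet (w j) ∩ Set.range w₁) ∧
    (∀ i j : Fin p, i < j →
      H.neighborSet (w (π i)) ∩ Set.range w₂ ⊂ H.neighborSet (w (π j)) ∩ Set.range w₂)

def IsInducedSubgraphOf {m n : ℕ} (H : SimpleGraph (Fin m)) (G : SimpleGraph (Fin n)) : Prop :=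
  ∃ f : Fin m ↪ Fin n, ∀ u v, H.Adj u v ↔ G.Adj (f u) (f v)

def Hereditary (C : ∀ n : ℕ, Set (SimpleGraph (Fin n))) : Prop :=
  ∀ (m n : ℕ) (H : SimpleGraph (Fin m)) (G : SimpleGraph (Fin n)),
    G ∈ C n → IsInducedSubgraphOf H G → H ∈ C m

/-- The elementary perturbation of `G` on the vertex subset `X`: the adjacency
relation is complemented on all pairs of distinct vertices of `X`. -/
def ElemPerturb {V : Type} (G : SimpleGraph V) (X : Set V) : SimpleGraph V where
  Adj u v := u ≠ v ∧ Xor' (G.Adj u v) (u ∈ X ∧ v ∈ X)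
  symm := by
    refine ⟨?_⟩
    intro u v h
    refine ⟨Ne.symm h.1, ?_⟩
    rcases h.2 with ⟨h1, h2⟩ | ⟨h1, h2⟩
    · exact Or.inl ⟨h1.symm, fun c => h2 ⟨c.2, c.1⟩⟩
    · exact Or.inr ⟨⟨h1.2, h1.1⟩, fun c => h2 c.symm⟩
  loopless := ⟨fun v h => h.1 rfl⟩

/-- `G` is obtained from `G₀` by a sequence of at most `r` elementary
perturbations. -/
def BoundedPerturbOf {V : Type} (r : ℕ) (G₀ G : SimpleGraph V) : Prop :=
  ∃ L : List (Set V), L.length ≤ r ∧ G = L.foldl ElemPerturb G₀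



def MTGrid (E : Finset (ℕ × ℕ)) (k : ℕ) : Prop :=
  ∃ P : Fin k → Fin k → ℕ × ℕ, (∀ i j, P i j ∈ E) ∧
    (∀ i i' j j', i < i' → (P i j).1 < (P i' j').1) ∧
    (∀ i i' j j', j < j' → (P i j).2 < (P i' j').2)

lemma MTGrid.swap {E : Finset (ℕ × ℕ)} {k : ℕ} (h : MTGrid (E.image Prod.swap) k) :
    MTGrid E k := by
  obtain ⟨P, h1, h2, h3⟩ := h
  refine ⟨fun i j => (P j i).swap, fun i j => ?_, fun i i' j j' h => ?_, fun i i' j j' h => ?_⟩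
  · obtain ⟨x, hx, hx'⟩ := mem_image.1 (h1 j i)
    simpa [← hx'] using hx
  · simpa using h3 _ _ _ _ h
  · simpa using h2 _ _ _ _ h

lemma MTGrid.quot {E : Finset (ℕ × ℕ)} {k q : ℕ}
    (h : MTGrid (E.image fun x => (x.1 / q, x.2 / q)) k) : MTGrid E k := by
  obtain ⟨P, h1, h2, h3⟩ := h
  have h1' : ∀ i j, ∃ x ∈ E, (x.1 / q, x.2 / q) = P i j := fun i j => by
    simpa only [mem_image] using h1 i j
  choose Q hQ hQ' using h1'
  refine ⟨Q, hQ, fun i i' j j' h => ?_, fun i i' j j' h => ?_⟩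
  · have := h2 i i' j j' h
    rw [← hQ', ← hQ'] at this
    by_contra hc
    exact absurd (Nat.div_le_div_right (c := q) (not_lt.1 hc)) (not_le.2 this)
  · have := h3 i i' j j' h
    rw [← hQ', ← hQ'] at this
    by_contra hc
    exact absurd (Nat.div_le_div_right (c := q) (not_lt.1 hc)) (not_le.2 this)

/-- columns occupied in block `(I,J)` -/
def mtCols (E : Finset (ℕ × ℕ)) (q : ℕ) (B : ℕ × ℕ) : Finset ℕ :=
  (E.filter fun x => (x.1 / q, x.2 / q) = B).image Prod.fst

def mtRows (E : Finset (ℕ × ℕ)) (q : ℕ) (B : ℕ × ℕ) : Finset ℕ :=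
  (E.filter fun x => (x.1 / q, x.2 / q) = B).image Prod.snd

lemma mt_wide_blocks {E : Finset (ℕ × ℕ)} {k q : ℕ} (hk : 1 ≤ k) (hq : 1 ≤ q)
    (hE : ¬ MTGrid E k) (I n : ℕ) :
    ((range n).filter fun J => k ≤ (mtCols E q (I, J)).card).card ≤ k * 2 ^ q := by
  by_contra hc
  push Not at hc
  apply hE
  have hmaps : ∀ J ∈ (range n).filter fun J => k ≤ (mtCols E q (I, J)).card,
      mtCols E q (I, J) ∈ (Ico (I * q) (I * q + q)).powerset := by
    intro J _
    rw [mem_powerset]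
    intro x hx
    simp only [mtCols, mem_image, mem_filter, Prod.mk.injEq] at hx
    obtain ⟨y, ⟨_, h1, _⟩, rfl⟩ := hx
    rw [Nat.div_eq_iff (by omega)] at h1
    rw [mem_Ico]
    omega
  have hcard : (Ico (I * q) (I * q + q)).powerset.card * k <
      ((range n).filter fun J => k ≤ (mtCols E q (I, J)).card).card := by
    simpa [card_powerset, mul_comm] using hc
  obtain ⟨S, _, hS⟩ := exists_lt_card_fiber_of_mul_lt_card_of_maps_to hmaps hcard
  set T := ((range n).filter fun J => k ≤ (mtCols E q (I, J)).card).filter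
    fun J => mtCols E q (I, J) = S with hT
  have hTm : ∀ J ∈ T, k ≤ S.card ∧ mtCols E q (I, J) = S := by
    intro J hJ
    simp only [hT, mem_filter] at hJ
    exact ⟨hJ.2 ▸ hJ.1.2, hJ.2⟩
  have hSk : k ≤ S.card := by
    obtain ⟨J, hJ⟩ : T.Nonempty := card_pos.1 (by omega)
    exact (hTm J hJ).1
  let xs := S.orderEmbOfCardLe hSk
  let js := T.orderEmbOfCardLe hS.le
  have hx : ∀ i j, ∃ y, (xs i, y) ∈ E ∧ y / q = js j := by
    intro i j
    have h1 : xs i ∈ S := S.orderEmbOfCardLe_mem hSk i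
    have h2 : js j ∈ T := T.orderEmbOfCardLe_mem hS.le j
    rw [← (hTm _ h2).2] at h1
    simp only [mtCols, mem_image, mem_filter, Prod.mk.injEq] at h1
    obtain ⟨⟨x, y⟩, ⟨h3, _, h4⟩, h5⟩ := h1
    exact ⟨y, by simpa [← h5] using h3, h4⟩
  choose ys h1 h2 using hx
  refine ⟨fun i j => (xs i, ys i j), h1, fun i i' j j' h => ?_, fun i i' j j' h => ?_⟩
  · exact xs.strictMono h
  · have : js j < js j' := js.strictMono h
    rw [← h2 i, ← h2 i'] at this
    by_contra hc
    exact absurd (Nat.div_le_div_right (c := q) (not_lt.1 hc)) (not_le.2 this)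

lemma mt_block_card (E : Finset (ℕ × ℕ)) (q : ℕ) (B : ℕ × ℕ) :
    (E.filter fun x => (x.1 / q, x.2 / q) = B).card ≤
      (mtCols E q B).card * (mtRows E q B).card := by
  rw [← card_product]
  apply card_le_card
  intro x hx
  rw [mem_product]
  exact ⟨mem_image_of_mem _ hx, mem_image_of_mem _ hx⟩

lemma mt_cols_card (E : Finset (ℕ × ℕ)) {q : ℕ} (hq : 1 ≤ q) (B : ℕ × ℕ) :
    (mtCols E q B).card ≤ q := by
  have : mtCols E q B ⊆ Ico (B.1 * q) (B.1 * q + q) := by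
    intro x hx
    simp only [mtCols, mem_image, mem_filter] at hx
    obtain ⟨y, ⟨_, rfl⟩, rfl⟩ := hx
    have := Nat.div_add_mod' y.1 q
    have := Nat.mod_lt y.1 hq
    simp only [mem_Ico]
    omega
  simpa using card_le_card this

lemma mt_rows_card (E : Finset (ℕ × ℕ)) {q : ℕ} (hq : 1 ≤ q) (B : ℕ × ℕ) :
    (mtRows E q B).card ≤ q := by
  have : mtRows E q B ⊆ Ico (B.2 * q) (B.2 * q + q) := by
    intro x hx
    simp only [mtRows, mem_image, mem_filter] at hx
    obtain ⟨y, ⟨_, rfl⟩, rfl⟩ := hx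
    have := Nat.div_add_mod' y.2 q
    have := Nat.mod_lt y.2 hq
    simp only [mem_Ico]
    omega
  simpa using card_le_card this

lemma mt_wide_card {E : Finset (ℕ × ℕ)} {k q n : ℕ} (hk : 1 ≤ k) (hq : 1 ≤ q)
    (hE : ¬ MTGrid E k) (hn : ∀ x ∈ E, x.1 < n * q ∧ x.2 < n * q) :
    (E.filter fun x => k ≤ (mtCols E q (x.1 / q, x.2 / q)).card).card
      ≤ n * (k * 2 ^ q) * (q * q) := by
  set F := E.filter fun x => k ≤ (mtCols E q (x.1 / q, x.2 / q)).card with hF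
  have h1 : F.card ≤ (q * q) * (F.image fun x => (x.1 / q, x.2 / q)).card := by
    apply card_le_mul_card_image
    intro B _
    calc _ ≤ (E.filter fun x => (x.1 / q, x.2 / q) = B).card := by
          apply card_le_card
          intro x hx
          simp only [hF, mem_filter] at hx ⊢
          exact ⟨hx.1.1, hx.2⟩
      _ ≤ _ := (mt_block_card E q B).trans
        (Nat.mul_le_mul (mt_cols_card E hq B) (mt_rows_card E hq B))
  have h2 : (F.image fun x => (x.1 / q, x.2 / q)).card ≤ n * (k * 2 ^ q) := by
    have hsub : (F.image fun x => (x.1 / q, x.2 / q)) ⊆ (range n).biUnion fun I =>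
        ((range n).filter fun J => k ≤ (mtCols E q (I, J)).card).image fun J => (I, J) := by
      intro B hB
      simp only [hF, mem_image, mem_filter] at hB
      obtain ⟨x, ⟨hx, hx2⟩, rfl⟩ := hB
      simp only [mem_biUnion, mem_range, mem_image, mem_filter]
      have := hn x hx
      refine ⟨x.1 / q, Nat.div_lt_of_lt_mul (by rw [mul_comm]; exact this.1), x.2 / q,
        ⟨Nat.div_lt_of_lt_mul (by rw [mul_comm]; exact this.2), hx2⟩, rfl⟩
    refine (card_le_card hsub).trans ?_
    refine (card_biUnion_le_card_mul _ _ (k * 2 ^ q) ?_).trans (by simp)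
    intro I _
    exact card_image_le.trans (mt_wide_blocks hk hq hE I n)
  calc _ ≤ _ := h1
    _ ≤ (q * q) * (n * (k * 2 ^ q)) := Nat.mul_le_mul_left _ h2
    _ = _ := by ring

lemma mt_rows_swap (E : Finset (ℕ × ℕ)) (q : ℕ) (x y : ℕ) :
    mtRows E q (x, y) = mtCols (E.image Prod.swap) q (y, x) := by
  ext z
  simp only [mtRows, mtCols, mem_image, mem_filter, Prod.mk.injEq]
  constructor
  · rintro ⟨w, ⟨hw, h1, h2⟩, rfl⟩
    exact ⟨w.swap, ⟨⟨w, hw, rfl⟩, h2, h1⟩, rfl⟩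
  · rintro ⟨_, ⟨⟨w, hw, rfl⟩, h2, h1⟩, rfl⟩
    exact ⟨w, ⟨hw, h1, h2⟩, rfl⟩

lemma mt_tall_card {E : Finset (ℕ × ℕ)} {k q n : ℕ} (hk : 1 ≤ k) (hq : 1 ≤ q)
    (hE : ¬ MTGrid E k) (hn : ∀ x ∈ E, x.1 < n * q ∧ x.2 < n * q) :
    (E.filter fun x => k ≤ (mtRows E q (x.1 / q, x.2 / q)).card).card
      ≤ n * (k * 2 ^ q) * (q * q) := by
  have := mt_wide_card (E := E.image Prod.swap) (n := n) hk hq (fun h => hE h.swap) (by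
    intro x hx
    obtain ⟨y, hy, rfl⟩ := mem_image.1 hx
    exact ⟨(hn y hy).2, (hn y hy).1⟩)
  refine le_trans ?_ this
  refine card_le_card_of_injOn Prod.swap ?_ Prod.swap_injective.injOn
  intro x hx
  simp only [coe_filter, Set.mem_setOf_eq] at hx ⊢
  refine ⟨mem_image_of_mem _ hx.1, ?_⟩
  have := hx.2
  rwa [mt_rows_swap] at this

lemma mt_pow {k : ℕ} (hk : 1 ≤ k) (t : ℕ) : ∀ E : Finset (ℕ × ℕ),
    (∀ x ∈ E, x.1 < (k * k) ^ t ∧ x.2 < (k * k) ^ t) → ¬ MTGrid E k →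
    E.card ≤ (2 * ((k * 2 ^ (k * k)) * ((k * k) * (k * k)))) * (k * k) ^ t := by
  have hq : 1 ≤ k * k := Nat.mul_pos hk hk
  induction t with
  | zero =>
    intro E hE _
    have h1 : E ⊆ {(0, 0)} := by
      intro x hx
      have := hE x hx
      simp only [pow_zero, Nat.lt_one_iff] at this
      simp [Prod.ext_iff, this.1, this.2]
    have h2 := card_le_card h1
    simp only [card_singleton] at h2
    refine h2.trans ?_
    have : 0 < (2 * ((k * 2 ^ (k * k)) * ((k * k) * (k * k)))) * (k * k) ^ 0 := by positivity
    exact this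
  | succ t ih =>
    intro E hE hg
    set q := k * k with hqdef
    set D := (k * 2 ^ q) * (q * q) with hD
    have hE' : ∀ x ∈ E, x.1 < q ^ t * q ∧ x.2 < q ^ t * q := by
      simpa [pow_succ] using hE
    have hw := mt_wide_card hk hq hg hE'
    have ht := mt_tall_card hk hq hg hE'
    have hquot := ih (E.image fun x => (x.1 / q, x.2 / q)) (by
      intro x hx
      obtain ⟨y, hy, rfl⟩ := mem_image.1 hx
      have := hE' y hy
      exact ⟨Nat.div_lt_of_lt_mul (by rw [mul_comm]; exact this.1),
        Nat.div_lt_of_lt_mul (by rw [mul_comm]; exact this.2)⟩) (fun h => hg h.quot)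
    set Ew := E.filter fun x => k ≤ (mtCols E q (x.1 / q, x.2 / q)).card with hEw
    set Et := E.filter fun x => k ≤ (mtRows E q (x.1 / q, x.2 / q)).card with hEt
    set Er := E.filter fun x => (mtCols E q (x.1 / q, x.2 / q)).card < k ∧
      (mtRows E q (x.1 / q, x.2 / q)).card < k with hEr
    have hcov : E ⊆ (Ew ∪ Et) ∪ Er := by
      intro x hx
      simp only [hEw, hEt, hEr, mem_union, mem_filter]
      by_cases h1 : k ≤ (mtCols E q (x.1 / q, x.2 / q)).card
      · exact Or.inl (Or.inl ⟨hx, h1⟩)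
      by_cases h2 : k ≤ (mtRows E q (x.1 / q, x.2 / q)).card
      · exact Or.inl (Or.inr ⟨hx, h2⟩)
      exact Or.inr ⟨hx, not_le.1 h1, not_le.1 h2⟩
    have hr : Er.card ≤ ((k - 1) * (k - 1)) * (E.image fun x => (x.1 / q, x.2 / q)).card := by
      have : Er.card ≤ ((k - 1) * (k - 1)) * (Er.image fun x => (x.1 / q, x.2 / q)).card := by
        apply card_le_mul_card_image
        intro B hB
        obtain ⟨y, hy, rfl⟩ := mem_image.1 hB
        have hy := (mem_filter.1 hy).2
        calc _ ≤ (E.filter fun x => (x.1 / q, x.2 / q) = (y.1 / q, y.2 / q)).card := by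
              apply card_le_card
              intro x hx
              simp only [hEr, mem_filter] at hx ⊢
              exact ⟨hx.1.1, hx.2⟩
          _ ≤ _ := (mt_block_card E q _).trans
            (Nat.mul_le_mul (by omega) (by omega))
      refine this.trans (Nat.mul_le_mul_left _ (card_le_card (image_subset_image ?_)))
      exact filter_subset _ _
    have h1 : E.card ≤ Ew.card + Et.card + Er.card :=
      (card_le_card hcov).trans ((card_union_le _ _).trans
        (Nat.add_le_add_right (card_union_le _ _) _))
    have h2 : (k - 1) * (k - 1) + 1 ≤ q := by
      obtain ⟨j, rfl⟩ : ∃ j, k = j + 1 := ⟨k - 1, by omega⟩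
      simp only [Nat.add_sub_cancel, hqdef]
      nlinarith
    calc E.card ≤ q ^ t * D + q ^ t * D + ((k - 1) * (k - 1)) * (2 * D * q ^ t) := by
          refine h1.trans (Nat.add_le_add (Nat.add_le_add ?_ ?_) ?_)
          · rw [hD, ← mul_assoc]; exact hw
          · rw [hD, ← mul_assoc]; exact ht
          · exact hr.trans (Nat.mul_le_mul_left _ hquot)
      _ = ((k - 1) * (k - 1) + 1) * (2 * D * q ^ t) := by ring
      _ ≤ q * (2 * D * q ^ t) := Nat.mul_le_mul_right _ h2
      _ = 2 * D * q ^ (t + 1) := by ring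

/-- Marcus Tardos for grids. -/
theorem mt_main (k : ℕ) (hk : 2 ≤ k) : ∃ C : ℕ, ∀ (n : ℕ) (E : Finset (ℕ × ℕ)),
    (∀ x ∈ E, x.1 < n ∧ x.2 < n) → ¬ MTGrid E k → E.card ≤ C * n := by
  refine ⟨(2 * ((k * 2 ^ (k * k)) * ((k * k) * (k * k)))) * (k * k), fun n E hE hg => ?_⟩
  rcases Nat.eq_zero_or_pos n with rfl | hn
  · have : E = ∅ := by
      apply eq_empty_of_forall_notMem
      intro x hx
      exact absurd (hE x hx).1 (by omega)
    simp [this]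
  have hq : 1 < k * k := by nlinarith
  have h1 := Nat.lt_pow_succ_log_self hq n
  have h2 := Nat.pow_log_le_self (k * k) hn.ne'
  have := mt_pow (by omega : 1 ≤ k) (Nat.log (k * k) n + 1) E (fun x hx =>
    ⟨(hE x hx).1.trans h1, (hE x hx).2.trans h1⟩) hg
  refine this.trans ?_
  rw [pow_succ', ← mul_assoc]
  exact Nat.mul_le_mul_left _ h2

/-- no part contains two of the `α`s -/
def SepBy {V : Type} [Fintype V] [DecidableEq V] {k : ℕ} (α : Fin k → V)
    (P : Finpartition (univ : Finset V)) : Prop :=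
  ∀ A ∈ P.parts, ∀ x y : Fin k, α x ∈ A → α y ∈ A → x = y

lemma red_parts {V : Type} [Fintype V] [DecidableEq V] {G : SimpleGraph V} {t : ℕ}
    {P : Finpartition (univ : Finset V)} {A : Finset V}
    (h : redDegree G P A ≤ t) (S : Finset (Finset V)) (hS : S ⊆ P.parts)
    (hS' : ∀ B ∈ S, B ≠ A → ¬ IsHomog G A B) : S.card ≤ t + 1 := by
  classical
  have : S.erase A ⊆ (P.parts.erase A).filter fun B => ¬ IsHomog G A B := by
    intro B hB
    rw [mem_erase] at hB
    rw [mem_filter, mem_erase]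
    exact ⟨⟨hB.1, hS hB.2⟩, hS' B hB.2 hB.1⟩
  have h2 := card_le_card this
  have h3 : (S.erase A).card ≤ t := by
    refine le_trans h2 (le_trans (le_of_eq ?_) h)
    unfold redDegree
    congr
  have := pred_card_le_card_erase (s := S) (a := A)
  omega

lemma merge_two {V : Type} [Fintype V] [DecidableEq V] {k : ℕ} {α : Fin k → V}
    {P Q : Finpartition (univ : Finset V)} (hm : IsMerge P Q) (hs : SepBy α P)
    {A : Finset V} (hA : A ∈ Q.parts) :
    (univ.filter fun x => α x ∈ A).card ≤ 2 := by
  obtain ⟨B, hB, C, hC, _, hQ⟩ := hm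
  have key : ∀ D ∈ P.parts, (univ.filter fun x => α x ∈ D).card ≤ 1 := by
    intro D hD
    rw [card_le_one]
    intro x hx y hy
    exact hs D hD x y (mem_filter.1 hx).2 (mem_filter.1 hy).2
  rw [hQ, mem_insert] at hA
  rcases hA with rfl | hA
  · have : (univ.filter fun x => α x ∈ B ∪ C) =
      (univ.filter fun x => α x ∈ B) ∪ (univ.filter fun x => α x ∈ C) := by
      ext x; simp
    rw [this]
    have := card_union_le (univ.filter fun x => α x ∈ B) (univ.filter fun x => α x ∈ C)
    have := key B hB
    have := key C hC
    omega
  · have := key A (mem_of_mem_erase (mem_of_mem_erase hA))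
    omega

lemma sep_step {V : Type} [Fintype V] [DecidableEq V] {G : SimpleGraph V} {t k : ℕ}
    (hk : (t + 1) * (2 * (t + 1) + 1) < k)
    {w : Fin k → Fin k → V} {α β : Fin k → V}
    (hα : ∀ i x y, G.Adj (w x y) (α i) ↔ i ≤ x)
    (hβ : ∀ i x y, G.Adj (w x y) (β i) ↔ i ≤ y)
    {P Q : Finpartition (univ : Finset V)} (hm : IsMerge P Q)
    (hred : ∀ A ∈ Q.parts, redDegree G Q A ≤ t) (hs : SepBy β P) : SepBy α Q := by
  classical
  have main : ∀ A ∈ Q.parts, ∀ x y : Fin k, α x ∈ A → α y ∈ A → x < y → False := by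
    intro A hA x x' hx hx' hlt
    -- the column x
    set S := univ.image fun y => Q.part (w x y) with hSdef
    have hS : S.card ≤ t + 1 := by
      refine red_parts (hred A hA) S ?_ ?_
      · intro B hB
        obtain ⟨y, _, rfl⟩ := mem_image.1 hB
        exact Q.part_mem.2 (mem_univ _)
      · intro B hB _ hh
        obtain ⟨y, _, rfl⟩ := mem_image.1 hB
        have hw : w x y ∈ Q.part (w x y) := Q.mem_part (mem_univ _)
        rcases hh with hh | hh
        · exact absurd ((hα x' x y).1 (hh _ hx' _ hw).symm) (not_le.2 hlt)
        · exact hh _ hx _ hw ((hα x x y).2 le_rfl).symm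
    have hmaps : ∀ y ∈ (univ : Finset (Fin k)), Q.part (w x y) ∈ S :=
      fun y hy => mem_image_of_mem _ hy
    obtain ⟨B, hBS, hB⟩ := exists_lt_card_fiber_of_mul_lt_card_of_maps_to (n := 2 * (t + 1) + 1)
      hmaps (by
        rw [card_univ, Fintype.card_fin]
        exact lt_of_le_of_lt (Nat.mul_le_mul_right _ hS) hk)
    set Y := univ.filter fun y => Q.part (w x y) = B with hY
    have hYne : Y.Nonempty := card_pos.1 (by omega)
    have hBQ : B ∈ Q.parts := by
      obtain ⟨y, _, rfl⟩ := mem_image.1 hBS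
      exact Q.part_mem.2 (mem_univ _)
    have hin : ∀ y ∈ Y, w x y ∈ B := by
      intro y hy
      rw [← (mem_filter.1 hy).2]
      exact Q.mem_part (mem_univ _)
    have h0 := hin _ (Y.min'_mem hYne)
    have h1 := hin _ (Y.max'_mem hYne)
    -- the betas in between
    set T := (Y.erase (Y.min' hYne)).image fun y => Q.part (β y) with hTdef
    have hT : T.card ≤ t + 1 := by
      refine red_parts (hred B hBQ) T ?_ ?_
      · intro D hD
        obtain ⟨y, _, rfl⟩ := mem_image.1 hD
        exact Q.part_mem.2 (mem_univ _)
      · intro D hD _ hh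
        obtain ⟨y, hy, rfl⟩ := mem_image.1 hD
        rw [mem_erase] at hy
        have hw : β y ∈ Q.part (β y) := Q.mem_part (mem_univ _)
        rcases hh with hh | hh
        · have := (hβ y _ _).1 (hh _ h0 _ hw)
          exact hy.1 (le_antisymm this (Y.min'_le _ hy.2))
        · exact hh _ h1 _ hw ((hβ y _ _).2 (Y.le_max' _ hy.2))
    have hc : (Y.erase (Y.min' hYne)).card ≤ 2 * T.card := by
      apply card_le_mul_card_image
      intro D hD
      obtain ⟨y, hy, rfl⟩ := mem_image.1 hD
      refine le_trans (card_le_card ?_) (merge_two hm hs (Q.part_mem.2 (mem_univ (β y))))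
      intro z hz
      simp only [mem_filter, mem_univ, true_and] at hz ⊢
      rw [← hz.2]
      exact Q.mem_part (mem_univ _)
    rw [card_erase_of_mem (Y.min'_mem hYne)] at hc
    omega
  intro A hA x y hx hy
  rcases lt_trichotomy x y with h | h | h
  · exact (main A hA x y hx hy h).elim
  · exact h
  · exact (main A hA y x hy hx h).elim

lemma sep_contra {V : Type} [Fintype V] [DecidableEq V] {G : SimpleGraph V} {t k : ℕ}
    (hk : (t + 1) * (2 * (t + 1) + 1) < k)
    {w : Fin k → Fin k → V} {α β : Fin k → V}
    (hα : ∀ i x y, G.Adj (w x y) (α i) ↔ i ≤ x)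
    (hβ : ∀ i x y, G.Adj (w x y) (β i) ↔ i ≤ y) (htw : TwinWidthLE G t) : False := by
  obtain ⟨L, ⟨P0, h0, h0'⟩, ⟨P1, h1, h1'⟩, hch, hred⟩ := htw
  have hk2 : 2 ≤ k := by nlinarith
  have hsingle : ∀ γ : Fin k → V, Function.Injective γ → SepBy γ P0 := by
    intro γ hγ A hA x y hx hy
    obtain ⟨a, rfl⟩ := card_eq_one.1 (h0' A hA)
    rw [mem_singleton] at hx hy
    exact hγ (hx.trans hy.symm)
  have hαi : Function.Injective α := by
    intro i j hij
    have h1 := (hα i i ⟨0, by omega⟩).2 le_rfl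
    have h2 := (hα j j ⟨0, by omega⟩).2 le_rfl
    rw [hij] at h1
    rw [← hij] at h2
    exact le_antisymm ((hα _ _ _).1 h2) ((hα _ _ _).1 h1)
  have hβi : Function.Injective β := by
    intro i j hij
    have h1 := (hβ i ⟨0, by omega⟩ i).2 le_rfl
    have h2 := (hβ j ⟨0, by omega⟩ j).2 le_rfl
    rw [hij] at h1
    rw [← hij] at h2
    exact le_antisymm ((hβ _ _ _).1 h2) ((hβ _ _ _).1 h1)
  have hstep : ∀ (L : List (Finpartition (univ : Finset V))) (P : Finpartition (univ : Finset V)),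
      List.IsChain IsMerge (P :: L) →
      (∀ R ∈ L, ∀ A ∈ R.parts, redDegree G R A ≤ t) → SepBy α P ∧ SepBy β P →
      ∀ R, (P :: L).getLast? = some R → SepBy α R ∧ SepBy β R := by
    intro L
    induction L with
    | nil =>
      intro P _ _ h R hR
      simp only [List.getLast?_singleton, Option.some.injEq] at hR
      exact hR ▸ h
    | cons Q L ih =>
      intro P hc hr h R hR
      rw [List.isChain_cons_cons] at hc
      rw [List.getLast?_cons_cons] at hR
      have hrQ := hr Q (by simp)
      refine ih Q hc.2 (fun R hR => hr R (by simp [hR])) ⟨?_, ?_⟩ R hR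
      · exact sep_step hk hα hβ hc.1 hrQ h.2
      · exact sep_step (w := fun x y => w y x) hk (fun i x y => hβ i y x) (fun i x y => hα i y x)
          hc.1 hrQ h.1
  match L, h0, h1, hch, hred with
  | P :: L, h0, h1, hch, hred =>
    simp only [List.head?_cons, Option.some.injEq] at h0
    subst h0
    have := (hstep L P hch (fun R hR => hred R (by simp [hR]))
      ⟨hsingle α hαi, hsingle β hβi⟩ P1 h1).1
    have hp : ∀ v : V, P1.part v ∈ P1.parts := fun v => P1.part_mem.2 (mem_univ v)
    have heq := card_le_one.1 h1' _ (hp (α ⟨0, by omega⟩)) _ (hp (α ⟨1, by omega⟩))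
    have := this _ (hp (α ⟨0, by omega⟩)) ⟨0, by omega⟩ ⟨1, by omega⟩
      (P1.mem_part (mem_univ _)) (by rw [heq]; exact P1.mem_part (mem_univ _))
    simp at this

lemma chain_elems {V : Type} {p : ℕ} (N : Fin p → Set V) (hne : ∀ i, (N i).Nonempty)
    (hs : ∀ i j, i < j → N i ⊂ N j) : ∃ α : Fin p → V, ∀ i j, α i ∈ N j ↔ i ≤ j := by
  have : ∀ i : Fin p, ∃ a, ∀ j, a ∈ N j ↔ i ≤ j := by
    intro i
    have hmono : ∀ i j, i ≤ j → N i ⊆ N j := by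
      intro i j hij
      rcases hij.eq_or_lt with rfl | h
      · exact subset_rfl
      · exact (hs i j h).subset
    rcases Nat.eq_zero_or_pos i.val with h0 | h0
    · obtain ⟨a, ha⟩ := hne i
      refine ⟨a, fun j => ?_⟩
      have hij : i ≤ j := by rw [Fin.le_def]; omega
      exact ⟨fun _ => hij, fun _ => hmono _ _ hij ha⟩
    · let i' : Fin p := ⟨i.val - 1, by omega⟩
      have hlt : i' < i := by rw [Fin.lt_def]; simp only [i']; omega
      obtain ⟨a, ha, ha'⟩ := Set.exists_of_ssubset (hs i' i hlt)
      refine ⟨a, fun j => ⟨fun hj => ?_, fun hj => hmono _ _ hj ha⟩⟩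
      by_contra hc
      apply ha'
      refine hmono j i' ?_ hj
      rw [Fin.le_def]
      simp only [i']
      rw [Fin.le_def] at hc
      omega
  choose α hα using this
  exact ⟨α, hα⟩

def gridPerm (k : ℕ) : Equiv.Perm (Fin (k * k)) :=
  finProdFinEquiv.symm.trans ((Equiv.prodComm _ _).trans finProdFinEquiv)

lemma finProd_le {k : ℕ} (h : 0 < k) (i x y : Fin k) :
    finProdFinEquiv (i, (⟨0, h⟩ : Fin k)) ≤ finProdFinEquiv (x, y) ↔ i ≤ x := by
  rw [Fin.le_def, Fin.le_def]
  simp only [finProdFinEquiv_apply_val]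
  constructor
  · intro hh
    by_contra hc
    push Not at hc
    have : k * (x.val + 1) ≤ k * i.val := Nat.mul_le_mul_left _ hc
    have := y.isLt
    rw [Nat.mul_add] at *
    omega
  · intro hh
    have : k * i.val ≤ k * x.val := Nat.mul_le_mul_left _ hh
    omega

lemma exposes_contra {V : Type} [Fintype V] [DecidableEq V] {G : SimpleGraph V} {t k : ℕ}
    (hk : (t + 1) * (2 * (t + 1) + 1) < k) (htw : TwinWidthLE G t)
    (hex : Exposes G (gridPerm k)) : False := by
  obtain ⟨w, w1, w2, -, -, -, -, -, -, -, hn1, hn2, hs1, hs2⟩ := hex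
  have hk0 : 0 < k := by omega
  obtain ⟨α, hα⟩ := chain_elems _ hn1 hs1
  obtain ⟨β, hβ⟩ := chain_elems (fun i => G.neighborSet (w (gridPerm k i)) ∩ Set.range w2)
    (fun i => hn2 _) hs2
  have hα1 : ∀ i, α i ∈ Set.range w1 := fun i => ((hα i i).2 le_rfl).2
  have hβ1 : ∀ i, β i ∈ Set.range w2 := fun i => ((hβ i i).2 le_rfl).2
  refine sep_contra (G := G) hk (w := fun x y => w (finProdFinEquiv (x, y)))
    (α := fun i => α (finProdFinEquiv (i, (⟨0, hk0⟩ : Fin k))))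
    (β := fun i => β (finProdFinEquiv (i, (⟨0, hk0⟩ : Fin k)))) ?_ ?_ htw
  · intro i x y
    rw [← finProd_le hk0 i x y, ← hα]
    exact ⟨fun h => ⟨h, hα1 _⟩, fun h => h.1⟩
  · intro i x y
    rw [← finProd_le hk0 i y x, ← hβ]
    have : gridPerm k (finProdFinEquiv (y, x)) = finProdFinEquiv (x, y) := by
      simp [gridPerm]
    rw [this]
    exact ⟨fun h => ⟨h, hβ1 _⟩, fun h => h.1⟩

lemma exposes_pack {n p : ℕ} (G : SimpleGraph (Fin n)) (π : Equiv.Perm (Fin p))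
    (w w₁ w₂ : Fin p → Fin n)
    (hw : Function.Injective w) (hw₁ : Function.Injective w₁) (hw₂ : Function.Injective w₂)
    (d1 : ∀ i j, w i ≠ w₁ j) (d2 : ∀ i j, w i ≠ w₂ j) (d3 : ∀ i j, w₁ i ≠ w₂ j)
    (n1 : ∀ k, ∃ i, G.Adj (w k) (w₁ i)) (n2 : ∀ k, ∃ i, G.Adj (w k) (w₂ i))
    (c1 : ∀ k k', k < k' → (∀ i, G.Adj (w k) (w₁ i) → G.Adj (w k') (w₁ i)) ∧
      ∃ i, G.Adj (w k') (w₁ i) ∧ ¬ G.Adj (w k) (w₁ i))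
    (c2 : ∀ k k', k < k' → (∀ i, G.Adj (w (π k)) (w₂ i) → G.Adj (w (π k')) (w₂ i)) ∧
      ∃ i, G.Adj (w (π k')) (w₂ i) ∧ ¬ G.Adj (w (π k)) (w₂ i)) :
    ∃ (m : ℕ) (H : SimpleGraph (Fin m)), IsInducedSubgraphOf H G ∧ Exposes H π := by
  let f : (Fin p ⊕ Fin p ⊕ Fin p) → Fin n := Sum.elim w (Sum.elim w₁ w₂)
  have hf : Function.Injective f := by
    rintro (x | x | x) (y | y | y) h <;> simp only [f, Sum.elim_inl, Sum.elim_inr] at h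
    · rw [hw h]
    · exact (d1 _ _ h).elim
    · exact (d2 _ _ h).elim
    · exact (d1 _ _ h.symm).elim
    · rw [hw₁ h]
    · exact (d3 _ _ h).elim
    · exact (d2 _ _ h.symm).elim
    · exact (d3 _ _ h.symm).elim
    · rw [hw₂ h]
  let e : Fin (Fintype.card (Fin p ⊕ Fin p ⊕ Fin p)) ≃ (Fin p ⊕ Fin p ⊕ Fin p) :=
    (Fintype.equivFin _).symm
  refine ⟨_, G.comap (f ∘ e), ⟨⟨f ∘ e, hf.comp e.injective⟩, fun u v => Iff.rfl⟩,
    fun i => e.symm (Sum.inl i), fun i => e.symm (Sum.inr (Sum.inl i)),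
    fun i => e.symm (Sum.inr (Sum.inr i)), ?_, ?_, ?_, ?_, ?_, ?_, ?_, ?_, ?_, ?_, ?_⟩
  · intro i j h; simpa using h
  · intro i j h; simpa using h
  · intro i j h; simpa using h
  · rw [Set.disjoint_left]; rintro _ ⟨i, rfl⟩ ⟨j, h⟩; simp at h
  · rw [Set.disjoint_left]; rintro _ ⟨i, rfl⟩ ⟨j, h⟩; simp at h
  · rw [Set.disjoint_left]; rintro _ ⟨i, rfl⟩ ⟨j, h⟩; simp at h
  · rw [Set.eq_univ_iff_forall]
    intro x
    obtain ⟨y, rfl⟩ := e.symm.surjective x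
    rcases y with y | y | y
    · exact Or.inl (Or.inl ⟨y, rfl⟩)
    · exact Or.inl (Or.inr ⟨y, rfl⟩)
    · exact Or.inr ⟨y, rfl⟩
  · intro k
    obtain ⟨i, hi⟩ := n1 k
    exact ⟨e.symm (Sum.inr (Sum.inl i)), by simpa [f] using hi, ⟨i, rfl⟩⟩
  · intro k
    obtain ⟨i, hi⟩ := n2 k
    exact ⟨e.symm (Sum.inr (Sum.inr i)), by simpa [f] using hi, ⟨i, rfl⟩⟩
  · intro k k' hkk
    obtain ⟨h1, i, h2, h3⟩ := c1 k k' hkk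
    rw [Set.ssubset_iff_of_subset]
    · refine ⟨e.symm (Sum.inr (Sum.inl i)), ⟨by simpa [f] using h2, ⟨i, rfl⟩⟩, fun h => h3 ?_⟩
      simpa [f] using h.1
    · rintro _ ⟨h, j, rfl⟩
      exact ⟨by simpa [f] using h1 j (by simpa [f] using h), ⟨j, rfl⟩⟩
  · intro k k' hkk
    obtain ⟨h1, i, h2, h3⟩ := c2 k k' hkk
    rw [Set.ssubset_iff_of_subset]
    · refine ⟨e.symm (Sum.inr (Sum.inr i)), ⟨by simpa [f] using h2, ⟨i, rfl⟩⟩, fun h => h3 ?_⟩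
      simpa [f] using h.1
    · rintro _ ⟨h, j, rfl⟩
      exact ⟨by simpa [f] using h1 j (by simpa [f] using h), ⟨j, rfl⟩⟩

lemma sep_select (p : ℕ) (τ : ℕ → Prop) : ∃ h e : Fin p → ℕ, StrictMono h ∧
    (∀ i, h i < 2 * p) ∧ (∀ k, e k < 6 * p) ∧ (∀ k i, e k ≠ 3 * h i + 1) ∧
    (∀ k, ∃ i, Xor (e k < 3 * h i + 1) (τ (h i))) ∧
    ∀ k k', k < k' →
      (∀ i, Xor (e k < 3 * h i + 1) (τ (h i)) → Xor (e k' < 3 * h i + 1) (τ (h i))) ∧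
      ∃ i, Xor (e k' < 3 * h i + 1) (τ (h i)) ∧ ¬ Xor (e k < 3 * h i + 1) (τ (h i)) := by
  classical
  have hcard := card_filter_add_card_filter_not (s := range (2 * p)) τ
  rw [card_range] at hcard
  rcases le_or_gt p ((range (2 * p)).filter τ).card with hc | hc
  · let h := ((range (2 * p)).filter τ).orderEmbOfCardLe hc
    have hm : ∀ i, h i < 2 * p ∧ τ (h i) := fun i => by
      have := orderEmbOfCardLe_mem ((range (2 * p)).filter τ) hc i
      simpa using this
    have hS : ∀ k i, Xor (3 * h k + 2 < 3 * h i + 1) (τ (h i)) ↔ i ≤ k := by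
      intro k i
      have h1 : 3 * h k + 2 < 3 * h i + 1 ↔ k < i := by
        rw [← h.lt_iff_lt]; omega
      rw [h1, ← not_lt]
      have := (hm i).2
      simp [Xor, this]
    refine ⟨h, fun k => 3 * h k + 2, h.strictMono, fun i => (hm i).1, fun k => ?_, fun k i => ?_,
      fun k => ⟨k, (hS k k).2 le_rfl⟩, fun k k' hk => ⟨fun i hi => ?_, k', ?_, ?_⟩⟩
    · have := (hm k).1; dsimp only; omega
    · dsimp only; omega
    · exact (hS k' i).2 (((hS k i).1 hi).trans hk.le)
    · exact (hS k' k').2 le_rfl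
    · exact fun hh => absurd ((hS k k').1 hh) (not_le.2 hk)
  · have hc : p ≤ ((range (2 * p)).filter fun x => ¬ τ x).card := by omega
    let h := ((range (2 * p)).filter fun x => ¬ τ x).orderEmbOfCardLe hc
    have hm : ∀ i, h i < 2 * p ∧ ¬ τ (h i) := fun i => by
      have := orderEmbOfCardLe_mem ((range (2 * p)).filter fun x => ¬ τ x) hc i
      simpa using this
    have hS : ∀ k i, Xor (3 * h (Fin.rev k) < 3 * h i + 1) (τ (h i)) ↔ Fin.rev k ≤ i := by
      intro k i
      have h1 : 3 * h (Fin.rev k) < 3 * h i + 1 ↔ Fin.rev k ≤ i := by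
        rw [← h.le_iff_le]; omega
      rw [h1]
      have := (hm i).2
      simp [Xor, this]
    refine ⟨h, fun k => 3 * h (Fin.rev k), h.strictMono, fun i => (hm i).1, fun k => ?_,
      fun k i => ?_, fun k => ⟨Fin.rev k, (hS k _).2 le_rfl⟩,
      fun k k' hk => ⟨fun i hi => ?_, Fin.rev k', ?_, ?_⟩⟩
    · have := (hm (Fin.rev k)).1; dsimp only; omega
    · dsimp only; omega
    · exact (hS k' i).2 ((Fin.rev_le_rev.2 hk.le).trans ((hS k i).1 hi))
    · exact (hS k' _).2 le_rfl
    · exact fun hh => absurd ((hS k _).1 hh) (not_le.2 (Fin.rev_lt_rev.2 hk))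

lemma exposes_of_grid {n p : ℕ} {κ : Type} (G : SimpleGraph (Fin n)) (π : Equiv.Perm (Fin p))
    (a b : Fin n → ℕ) (c : Fin n → κ) (F : κ → κ → Prop)
    (hab : ∀ v, a v ≤ b v) (hba : ∀ v, ∃ u, b u = a v) (hab' : ∀ v, ∃ u, a u = b v)
    (hG : ∀ u v, u ≠ v → (G.Adj u v ↔ Xor (a u ≤ b v ∧ a v ≤ b u) (F (c u) (c v))))
    (c0 : κ) (v : ℕ → ℕ → Fin n) (hc : ∀ i j, i ≤ 6 * p → j ≤ 6 * p → c (v i j) = c0)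
    (hx : ∀ i i' j j', i < i' → i' ≤ 6 * p → j ≤ 6 * p → j' ≤ 6 * p →
      a (v i j) < a (v i' j'))
    (hy : ∀ i i' j j', j < j' → j' ≤ 6 * p → i ≤ 6 * p → i' ≤ 6 * p →
      b (v i j) < b (v i' j')) :
    ∃ (m : ℕ) (H : SimpleGraph (Fin m)), IsInducedSubgraphOf H G ∧ Exposes H π := by
  have hU : ∀ s, ∃ u, b u = a (v (3 * s + 1) 1) := fun s => hba _
  have hT : ∀ s, ∃ u, a u = b (v 0 (3 * s + 2)) := fun s => hab' _
  choose U hU using hU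
  choose T hT using hT
  have hz := hab (v (6 * p) 0)
  obtain ⟨h1, e1, hm1, hl1, hel1, hne1, hn1, hc1⟩ := sep_select p (fun s => F c0 (c (U s)))
  obtain ⟨h2, e2, hm2, hl2, hel2, hne2, hn2, hc2⟩ := sep_select p (fun s => ¬ F c0 (c (T s)))
  have hUz : ∀ i, b (U (h1 i)) < a (v (6 * p) 0) := by
    intro i
    have := hl1 i
    rw [hU]
    exact hx _ _ _ _ (by omega) (by omega) (by omega) (by omega)
  have hTz : ∀ i, b (v (6 * p) 0) < a (T (h2 i)) := by
    intro i
    have := hl2 i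
    rw [hT]
    exact hy _ _ _ _ (by omega) (by omega) (by omega) (by omega)
  let w : Fin p → Fin n := fun k => v (e1 k) (e2 (π.symm k) + 1)
  have hwa : ∀ k, a (w k) < a (v (6 * p) 0) := by
    intro k
    have := hel1 k
    have := hel2 (π.symm k)
    exact hx _ _ _ _ (by omega) (by omega) (by omega) (by omega)
  have hwb : ∀ k, b (v (6 * p) 0) < b (w k) := by
    intro k
    have := hel1 k
    have := hel2 (π.symm k)
    exact hy _ _ _ _ (by omega) (by omega) (by omega) (by omega)
  have hwc : ∀ k, c (w k) = c0 := by
    intro k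
    have := hel1 k
    have := hel2 (π.symm k)
    exact hc _ _ (by omega) (by omega)
  have d1 : ∀ k i, w k ≠ U (h1 i) := by
    intro k i h
    have := hUz i
    have := hwb k
    rw [h] at this
    omega
  have d2 : ∀ k i, w k ≠ T (h2 i) := by
    intro k i h
    have := hTz i
    have := hwa k
    rw [h] at this
    omega
  have d3 : ∀ k i, U (h1 k) ≠ T (h2 i) := by
    intro k i h
    have := hTz i
    have := hUz k
    have := hab (T (h2 i))
    rw [h] at *
    omega
  have A1 : ∀ k i, G.Adj (w k) (U (h1 i)) ↔ Xor (e1 k < 3 * h1 i + 1) (F c0 (c (U (h1 i)))) := by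
    intro k i
    rw [hG _ _ (d1 k i), hwc]
    have e : (a (w k) ≤ b (U (h1 i)) ∧ a (U (h1 i)) ≤ b (w k)) ↔ e1 k < 3 * h1 i + 1 := by
      have i1 := hUz i
      have i2 := hwb k
      have i3 := hab (U (h1 i))
      have i4 := hel1 k
      have i5 := hel2 (π.symm k)
      have i6 := hl1 i
      constructor
      · rintro ⟨j1, _⟩
        by_contra hh
        have : 3 * h1 i + 1 < e1 k := lt_of_le_of_ne (by omega) (hne1 k i).symm
        have := hx (3 * h1 i + 1) (e1 k) 1 (e2 (π.symm k) + 1) this (by omega) (by omega) (by omega)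
        rw [hU] at j1
        exact absurd j1 (not_le.2 this)
      · intro hh
        refine ⟨?_, by omega⟩
        have := hx (e1 k) (3 * h1 i + 1) (e2 (π.symm k) + 1) 1 hh (by omega) (by omega) (by omega)
        rw [hU]
        exact this.le
    rw [e]
  have A2 : ∀ k i, G.Adj (w k) (T (h2 i)) ↔
      Xor (e2 (π.symm k) < 3 * h2 i + 1) (¬ F c0 (c (T (h2 i)))) := by
    intro k i
    rw [hG _ _ (d2 k i), hwc]
    have e : (a (w k) ≤ b (T (h2 i)) ∧ a (T (h2 i)) ≤ b (w k)) ↔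
        ¬ (e2 (π.symm k) < 3 * h2 i + 1) := by
      have i1 := hTz i
      have i2 := hwa k
      have i3 := hab (T (h2 i))
      have i4 := hel1 k
      have i5 := hel2 (π.symm k)
      have i6 := hl2 i
      constructor
      · rintro ⟨_, j1⟩ hh
        have := hy (e1 k) 0 (e2 (π.symm k) + 1) (3 * h2 i + 2) (by omega)
          (by omega) (by omega) (by omega)
        rw [hT] at j1
        exact absurd j1 (not_le.2 this)
      · intro hh
        refine ⟨by omega, ?_⟩
        have : 3 * h2 i + 1 < e2 (π.symm k) := lt_of_le_of_ne (by omega) (hne2 _ i).symm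
        have := hy 0 (e1 k) (3 * h2 i + 2) (e2 (π.symm k) + 1) (by omega)
          (by omega) (by omega) (by omega)
        rw [hT]
        exact this.le
    rw [e]
    unfold Xor
    tauto
  have C1 : ∀ k k', k < k' → (∀ i, G.Adj (w k) (U (h1 i)) → G.Adj (w k') (U (h1 i))) ∧
      ∃ i, G.Adj (w k') (U (h1 i)) ∧ ¬ G.Adj (w k) (U (h1 i)) := by
    simpa only [A1] using hc1
  refine exposes_pack G π w (fun i => U (h1 i)) (fun i => T (h2 i)) ?_ ?_ ?_ d1 d2 d3 ?_ ?_ C1 ?_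
  · intro k k' h
    rcases lt_trichotomy k k' with hl | hl | hl
    · obtain ⟨_, i, q1, q2⟩ := C1 _ _ hl
      rw [h] at q2
      exact absurd q1 q2
    · exact hl
    · obtain ⟨_, i, q1, q2⟩ := C1 _ _ hl
      rw [h] at q1
      exact absurd q1 q2
  · apply Function.Injective.of_comp (f := b)
    apply StrictMono.injective
    intro i j hij
    have := hm1 hij
    have := hl1 j
    simp only [Function.comp, hU]
    exact hx _ _ _ _ (by omega) (by omega) (by omega) (by omega)
  · apply Function.Injective.of_comp (f := a)
    apply StrictMono.injective
    intro i j hij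
    have := hm2 hij
    have := hl2 j
    simp only [Function.comp, hT]
    exact hy _ _ _ _ (by omega) (by omega) (by omega) (by omega)
  · intro k
    simpa only [A1] using hn1 k
  · intro k
    simpa only [A2] using hn2 (π.symm k)
  · intro k k' hk
    simpa only [A2, Equiv.symm_apply_apply] using hc2 k k' hk

lemma perturb_color {V : Type} : ∀ (L : List (Set V)) (G₀ : SimpleGraph V),
    ∃ (κ : Type) (_ : Fintype κ) (c : V → κ) (F : κ → κ → Prop),
      Fintype.card κ = 2 ^ L.length ∧ ∀ u v, u ≠ v →
        ((L.foldl ElemPerturb G₀).Adj u v ↔ Xor (G₀.Adj u v) (F (c u) (c v))) := by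
  classical
  intro L
  induction L with
  | nil =>
    intro G₀
    refine ⟨Unit, inferInstance, fun _ => (), fun _ _ => False, by simp, fun u v _ => ?_⟩
    simp [Xor]
  | cons X L ih =>
    intro G₀
    obtain ⟨κ, hκ, c, F, hcard, h⟩ := ih (ElemPerturb G₀ X)
    refine ⟨κ × Bool, inferInstance, fun v => (c v, decide (v ∈ X)),
      fun x y => Xor (F x.1 y.1) (x.2 = true ∧ y.2 = true), ?_, fun u v huv => ?_⟩
    · simp [hcard, pow_succ]
    · rw [List.foldl_cons, h u v huv]
      have : (ElemPerturb G₀ X).Adj u v ↔ Xor (G₀.Adj u v) (u ∈ X ∧ v ∈ X) :=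
        ⟨fun h => h.2, fun h => ⟨huv, h⟩⟩
      rw [this]
      simp only [decide_eq_true_eq]
      unfold Xor
      tauto

lemma interval_normal {n : ℕ} {G : SimpleGraph (Fin n)} (hG : IsIntervalGraph G) :
    ∃ a b : Fin n → ℕ, (∀ v, a v ≤ b v) ∧ (∀ v, ∃ u, b u = a v) ∧ (∀ v, ∃ u, a u = b v) ∧
      ∀ u v, u ≠ v → (G.Adj u v ↔ (a u ≤ b v ∧ a v ≤ b u)) := by
  classical
  obtain ⟨l, r, hlr, hadj⟩ := hG
  have h1 : ∀ v, ∃ u, l u ≤ r v ∧ ∀ u', l u' ≤ r v → l u' ≤ l u := by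
    intro v
    obtain ⟨u, hu, hu'⟩ := exists_max_image (univ.filter fun u => l u ≤ r v) l
      ⟨v, by simpa using hlr v⟩
    refine ⟨u, by simpa using hu, fun u' h => hu' u' (by simpa using h)⟩
  choose β hβ hβ' using h1
  have hb : ∀ u v, l u ≤ l (β v) ↔ l u ≤ r v :=
    fun u v => ⟨fun h => h.trans (hβ v), fun h => hβ' v u h⟩
  have h2 : ∀ v, ∃ u, l v ≤ l (β u) ∧ ∀ u', l v ≤ l (β u') → l (β u) ≤ l (β u') := by
    intro v
    obtain ⟨u, hu, hu'⟩ := exists_min_image (univ.filter fun u => l v ≤ l (β u))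
      (fun u => l (β u)) ⟨v, by simpa [hb] using hlr v⟩
    refine ⟨u, by simpa using hu, fun u' h => hu' u' (by simpa using h)⟩
  choose α hα hα' using h2
  let a' : Fin n → ℚ := fun v => l (β (α v))
  let b' : Fin n → ℚ := fun v => l (β v)
  have ha : ∀ u v, a' u ≤ b' v ↔ l u ≤ r v := by
    intro u v
    rw [← hb]
    exact ⟨fun h => (hα u).trans h, fun h => hα' u v h⟩
  let rk : ℚ → ℕ := fun x => ((univ.image b').filter fun y => y < x).card
  have hrk : ∀ u v, rk (a' u) ≤ rk (b' v) ↔ a' u ≤ b' v := by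
    intro u v
    constructor
    · intro h
      by_contra hc
      push Not at hc
      have : rk (b' v) < rk (a' u) := by
        apply card_lt_card
        rw [ssubset_iff_of_subset]
        · exact ⟨b' v, by simp [hc], by simp⟩
        · intro x hx
          simp only [mem_filter] at hx ⊢
          exact ⟨hx.1, hx.2.trans hc⟩
      omega
    · intro h
      apply card_le_card
      intro x hx
      simp only [mem_filter] at hx ⊢
      exact ⟨hx.1, hx.2.trans_le h⟩
  refine ⟨fun v => rk (a' v), fun v => rk (b' v), fun v => ?_, fun v => ⟨α v, rfl⟩,
    fun v => ⟨β v, ?_⟩, fun u v huv => ?_⟩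
  · exact (hrk v v).2 ((ha v v).2 (hlr v))
  · have : a' (β v) = b' v := le_antisymm (hα' (β v) v le_rfl) (hα (β v))
    simp only [this]
  · simp only [hrk, ha]
    rw [hadj u v huv, max_le_iff, le_min_iff, le_min_iff]
    have := hlr u
    have := hlr v
    tauto

section TW
variable {V : Type} [Fintype V] [DecidableEq V]

def TWStep (G : SimpleGraph V) (d : ℕ) (P Q : Finpartition (univ : Finset V)) : Prop :=
  IsMerge P Q ∧ ∀ A ∈ Q.parts, redDegree G Q A ≤ d

lemma tw_of_reach {G : SimpleGraph V} {d : ℕ} {P Q : Finpartition (univ : Finset V)}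
    (hP : ∀ A ∈ P.parts, A.card = 1) (hPd : ∀ A ∈ P.parts, redDegree G P A ≤ d)
    (hQ : Q.parts.card ≤ 1) (h : Relation.ReflTransGen (TWStep G d) P Q) : TwinWidthLE G d := by
  obtain ⟨L, hL, hlast⟩ := List.exists_isChain_cons_of_relationReflTransGen h
  refine ⟨P :: L, ⟨P, rfl, hP⟩, ⟨Q, ?_, hQ⟩, hL.imp fun _ _ h => h.1, ?_⟩
  · rw [List.getLast?_eq_getLast_of_ne_nil (List.cons_ne_nil _ _), hlast]
  · have : ∀ (L : List (Finpartition (univ : Finset V))) P,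
        List.IsChain (TWStep G d) (P :: L) → (∀ A ∈ P.parts, redDegree G P A ≤ d) →
        ∀ R ∈ P :: L, ∀ A ∈ R.parts, redDegree G R A ≤ d := by
      intro L
      induction L with
      | nil =>
        intro P _ h R hR
        simp only [List.mem_singleton] at hR
        exact hR ▸ h
      | cons Q L ih =>
        intro P hc h R hR
        rw [List.isChain_cons_cons] at hc
        rw [List.mem_cons] at hR
        rcases hR with rfl | hR
        · exact h
        · exact ih Q hc.2 hc.1.2 R hR
    exact this L P hL hPd

/-- merging two parts -/
def mergeP (P : Finpartition (univ : Finset V)) (A B : Finset V) (hA : A ∈ P.parts)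
    (hB : B ∈ P.parts) : Finpartition (univ : Finset V) :=
  Finpartition.ofExistsUnique (insert (A ∪ B) ((P.parts.erase A).erase B))
    (fun _ _ => subset_univ _)
    (by
      intro v _
      obtain ⟨T, ⟨hT, hvT⟩, -⟩ := P.existsUnique_mem (mem_univ v)
      by_cases h : v ∈ A ∪ B
      · refine ⟨A ∪ B, ⟨mem_insert_self _ _, h⟩, ?_⟩
        rintro S ⟨hS, hvS⟩
        rw [mem_insert] at hS
        rcases hS with rfl | hS
        · rfl
        · rw [mem_erase, mem_erase] at hS
          rcases mem_union.1 h with h | h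
          · exact (hS.2.1 (P.eq_of_mem_parts hS.2.2 hA hvS h)).elim
          · exact (hS.1 (P.eq_of_mem_parts hS.2.2 hB hvS h)).elim
      · rw [mem_union, not_or] at h
        refine ⟨T, ⟨?_, hvT⟩, ?_⟩
        · rw [mem_insert, mem_erase, mem_erase]
          refine Or.inr ⟨?_, ?_, hT⟩
          · rintro rfl; exact h.2 hvT
          · rintro rfl; exact h.1 hvT
        · rintro S ⟨hS, hvS⟩
          rw [mem_insert] at hS
          rcases hS with rfl | hS
          · exact ((mem_union.1 hvS).elim h.1 h.2).elim
          · rw [mem_erase, mem_erase] at hS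
            exact P.eq_of_mem_parts hS.2.2 hT hvS hvT)
    (by
      intro h
      rw [mem_insert] at h
      rcases h with h | h
      · have h2 := (P.nonempty_of_mem_parts hA)
        have : A = ∅ := (union_eq_empty.1 h.symm).1
        rw [this] at h2
        exact not_nonempty_empty h2
      · rw [mem_erase, mem_erase] at h
        exact P.empty_notMem_parts h.2.2)

lemma mergeP_parts (P : Finpartition (univ : Finset V)) (A B : Finset V) (hA : A ∈ P.parts)
    (hB : B ∈ P.parts) :
    (mergeP P A B hA hB).parts = insert (A ∪ B) ((P.parts.erase A).erase B) := rfl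

lemma reach_of_le {G : SimpleGraph V} {d : ℕ} {Q : Finpartition (univ : Finset V)} :
    ∀ (m : ℕ) (P : Finpartition (univ : Finset V)), P.parts.card = m → P ≤ Q →
    (∀ R, P ≤ R → R ≤ Q → ∀ A ∈ R.parts, redDegree G R A ≤ d) →
    Relation.ReflTransGen (TWStep G d) P Q := by
  intro m
  induction m using Nat.strong_induction_on with
  | _ m ih =>
  intro P hPm hPQ hR
  by_cases hex : ∃ A ∈ P.parts, ∃ B ∈ P.parts, ∃ C ∈ Q.parts, A ≠ B ∧ A ⊆ C ∧ B ⊆ C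
  · obtain ⟨A, hA, B, hB, C, hC, hAB, hAC, hBC⟩ := hex
    set R := mergeP P A B hA hB with hRdef
    have hparts : R.parts = insert (A ∪ B) ((P.parts.erase A).erase B) := rfl
    have hPR : P ≤ R := by
      intro D hD
      by_cases h1 : D = A
      · exact ⟨A ∪ B, by rw [hparts]; exact mem_insert_self _ _, by
          rw [h1]; exact subset_union_left⟩
      by_cases h2 : D = B
      · exact ⟨A ∪ B, by rw [hparts]; exact mem_insert_self _ _, by
          rw [h2]; exact subset_union_right⟩
      exact ⟨D, by rw [hparts, mem_insert, mem_erase, mem_erase]; exact Or.inr ⟨h2, h1, hD⟩, le_rfl⟩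
    have hRQ : R ≤ Q := by
      intro D hD
      rw [hparts, mem_insert, mem_erase, mem_erase] at hD
      rcases hD with rfl | hD
      · exact ⟨C, hC, union_subset hAC hBC⟩
      · exact hPQ hD.2.2
    have hcard : R.parts.card < m := by
      rw [hparts]
      have h1 := card_insert_le (A ∪ B) ((P.parts.erase A).erase B)
      have h2 : ((P.parts.erase A).erase B).card = P.parts.card - 1 - 1 := by
        rw [card_erase_of_mem (mem_erase.2 ⟨hAB.symm, hB⟩), card_erase_of_mem hA]
      have h3 : 1 < P.parts.card := one_lt_card.2 ⟨A, hA, B, hB, hAB⟩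
      omega
    refine Relation.ReflTransGen.head (b := R) ⟨⟨A, hA, B, hB, hAB, hparts⟩, hR R hPR hRQ⟩ ?_
    exact ih _ hcard R rfl hRQ (fun S h1 h2 => hR S (hPR.trans h1) h2)
  · have : P = Q := by
      apply le_antisymm hPQ
      intro C hC
      obtain ⟨x, hx⟩ := Q.nonempty_of_mem_parts hC
      have key : ∀ y ∈ C, P.part y ⊆ C := by
        intro y hy
        obtain ⟨D, hD, hyD⟩ := hPQ (P.part_mem.2 (mem_univ y))
        have : D = C := Q.eq_of_mem_parts hD hC (hyD (P.mem_part (mem_univ y))) hy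
        rw [← this]
        exact hyD
      refine ⟨P.part x, P.part_mem.2 (mem_univ x), fun y hy => ?_⟩
      by_contra hc
      apply hex
      refine ⟨P.part x, P.part_mem.2 (mem_univ x), P.part y, P.part_mem.2 (mem_univ y), C, hC,
        ?_, key x hx, key y hy⟩
      intro he
      rw [he] at hc
      exact hc (P.mem_part (mem_univ y))
    rw [this]

noncomputable def fibP {α : Type} (f : V → α) : Finpartition (univ : Finset V) :=
  letI : DecidableRel (Setoid.ker f).r := Classical.decRel _
  Finpartition.ofSetoid (Setoid.ker f)

lemma mem_fibP_part {α : Type} (f : V → α) (u v : V) : v ∈ (fibP f).part u ↔ f u = f v := by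
  unfold fibP
  letI : DecidableRel (Setoid.ker f).r := Classical.decRel _
  exact Finpartition.mem_part_ofSetoid_iff_rel

lemma fibP_eq {α : Type} (f : V → α) {A : Finset V} (hA : A ∈ (fibP f).parts) {u v : V}
    (hu : u ∈ A) : v ∈ A ↔ f u = f v := by
  rw [← mem_fibP_part, (fibP f).part_eq_of_mem hA hu]

lemma fibP_le {α β : Type} (f : V → α) (h : V → β) (hfh : ∀ u v, f u = f v → h u = h v) :
    fibP f ≤ fibP h := by
  intro A hA
  obtain ⟨x, hx⟩ := (fibP f).nonempty_of_mem_parts hA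
  refine ⟨(fibP h).part x, (fibP h).part_mem.2 (mem_univ x), fun y hy => ?_⟩
  rw [mem_fibP_part]
  exact hfh _ _ ((fibP_eq f hA hx).1 hy)

def BadPair {β : Type} (G : SimpleGraph V) (h : V → β) (a b : V) : Prop :=
  ∃ u u' v v', h u = h a ∧ h u' = h a ∧ h v = h b ∧ h v' = h b ∧ u' ≠ v' ∧
    G.Adj u v ∧ ¬ G.Adj u' v'

open Classical in
lemma red_between {α β : Type} (G : SimpleGraph V) (f : V → α) (h : V → β)
    {R : Finpartition (univ : Finset V)} (h1 : fibP f ≤ R) (h2 : R ≤ fibP h)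
    {A : Finset V} (hA : A ∈ R.parts) :
    ∃ a, redDegree G R A ≤ ((univ.filter fun b => BadPair G h a b).image f).card := by
  have hf : ∀ B ∈ R.parts, ∀ u v, f u = f v → u ∈ B → v ∈ B := by
    intro B hB u v huv hu
    obtain ⟨D, hD, hsub⟩ := h1 ((fibP f).part_mem.2 (mem_univ u))
    have huD : u ∈ D := hsub ((mem_fibP_part f u u).2 rfl)
    have hvD : v ∈ D := hsub ((mem_fibP_part f u v).2 huv)
    rwa [R.eq_of_mem_parts hD hB huD hu] at hvD
  have hh : ∀ B ∈ R.parts, ∀ u ∈ B, ∀ v ∈ B, h u = h v := by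
    intro B hB u hu v hv
    obtain ⟨D, hD, hsub⟩ := h2 hB
    exact (fibP_eq h hD (hsub hu)).1 (hsub hv)
  obtain ⟨a, ha⟩ := R.nonempty_of_mem_parts hA
  refine ⟨a, ?_⟩
  have hpick : ∀ B : Finset V, ∃ b, B ∈ R.parts → b ∈ B := by
    intro B
    by_cases hB : B ∈ R.parts
    · obtain ⟨b, hb⟩ := R.nonempty_of_mem_parts hB
      exact ⟨b, fun _ => hb⟩
    · exact ⟨a, fun h => absurd h hB⟩
  choose pick hpick using hpick
  unfold redDegree
  refine card_le_card_of_injOn (fun B => f (pick B)) ?_ ?_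
  · intro B hB
    simp only [coe_filter, mem_erase, Set.mem_ofPred_eq] at hB
    obtain ⟨⟨hBA, hB⟩, hnh⟩ := hB
    simp only [IsHomog, not_or, not_forall, not_not] at hnh
    obtain ⟨⟨u', hu', v', hv', hn⟩, u, hu, v, hv, hy⟩ := hnh
    rw [mem_coe]
    apply mem_image_of_mem
    simp only [mem_filter, mem_univ, true_and]
    refine ⟨u, u', v, v', hh A hA _ hu _ ha, hh A hA _ hu' _ ha, hh B hB _ hv _ (hpick B hB),
      hh B hB _ hv' _ (hpick B hB), ?_, hy, hn⟩
    rintro rfl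
    exact hBA (R.eq_of_mem_parts hB hA hv' hu')
  · intro B hB B' hB' he
    simp only [coe_filter, mem_erase, Set.mem_ofPred_eq] at hB hB'
    have := hf B hB.1.2 _ _ he (hpick B hB.1.2)
    exact R.eq_of_mem_parts hB.1.2 hB'.1.2 this (hpick B' hB'.1.2)

end TW

section Division
variable {V κ : Type} [Fintype V] [DecidableEq V] [DecidableEq κ]

def dkey (a b : V → ℕ) (c : V → κ) (g : ℕ → ℕ) (v : V) : ℕ × ℕ × κ := (g (a v), g (b v), c v)

def dkeys (a b : V → ℕ) (c : V → κ) (g : ℕ → ℕ) : Finset (ℕ × ℕ × κ) :=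
  univ.image (dkey a b c g)

def drow (a b : V → ℕ) (c : V → κ) (g : ℕ → ℕ) (i : ℕ) : Finset (ℕ × ℕ × κ) :=
  (dkeys a b c g).filter fun x => x.2.1 = i

def dcol (a b : V → ℕ) (c : V → κ) (g : ℕ → ℕ) (i : ℕ) : Finset (ℕ × ℕ × κ) :=
  (dkeys a b c g).filter fun x => x.1 = i

def DInv (a b : V → ℕ) (c : V → κ) (d : ℕ) (g : ℕ → ℕ) : Prop :=
  ∀ i, (∀ x y, g x = i → g y = i → x = y) ∨
    ((drow a b c g i).card ≤ d ∧ (dcol a b c g i).card ≤ d)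

lemma div_aux {g : ℕ → ℕ} (hg : Monotone g) {x y x' y' : ℕ} (hx : g x' = g x) (hy : g y' = g y)
    (hne : ¬ (x ≤ y ↔ x' ≤ y')) : g x = g y ∧ ¬ (∀ z w, g z = g x → g w = g x → z = w) := by
  have e : g x = g y := by
    rcases lt_trichotomy (g x) (g y) with h | h | h
    · have h1 : x < y := hg.reflect_lt h
      have h2 : x' < y' := hg.reflect_lt (by rw [hx, hy]; exact h)
      exact (hne ⟨fun _ => h2.le, fun _ => h1.le⟩).elim
    · exact h
    · have h1 : y < x := hg.reflect_lt h
      have h2 : y' < x' := hg.reflect_lt (by rw [hx, hy]; exact h)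
      exact (hne ⟨fun hh => absurd hh (not_le.2 h1), fun hh => absurd hh (not_le.2 h2)⟩).elim
  refine ⟨e, fun hinj => hne ?_⟩
  have h1 : y = x := hinj _ _ e.symm rfl
  have h2 : x' = x := hinj _ _ hx rfl
  have h3 : y' = x := hinj _ _ (hy.trans e.symm) rfl
  rw [h1, h2, h3]

lemma bad_key {G : SimpleGraph V} {a b : V → ℕ} {c : V → κ} {F : κ → κ → Prop}
    (hG : ∀ u v, u ≠ v → (G.Adj u v ↔ Xor (a u ≤ b v ∧ a v ≤ b u) (F (c u) (c v))))
    {g : ℕ → ℕ} (hg : Monotone g) {x y : V} (hbad : BadPair G (dkey a b c g) x y) :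
    (g (b y) = g (a x) ∧ ¬ (∀ z w, g z = g (a x) → g w = g (a x) → z = w)) ∨
    (g (a y) = g (b x) ∧ ¬ (∀ z w, g z = g (b x) → g w = g (b x) → z = w)) := by
  obtain ⟨u, u', v, v', hu, hu', hv, hv', hne, hadj, hnadj⟩ := hbad
  simp only [dkey, Prod.mk.injEq] at hu hu' hv hv'
  rw [hG _ _ hadj.ne, hu.2.2, hv.2.2] at hadj
  rw [hG _ _ hne, hu'.2.2, hv'.2.2] at hnadj
  have : ¬ (a u ≤ b v ↔ a u' ≤ b v') ∨ ¬ (a v ≤ b u ↔ a v' ≤ b u') := by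
    unfold Xor at hadj hnadj
    tauto
  rcases this with h | h
  · obtain ⟨h1, h2⟩ := div_aux hg (hu'.1.trans hu.1.symm) (hv'.2.1.trans hv.2.1.symm) h
    rw [hu.1] at h1 h2
    exact Or.inl ⟨by rw [h1, hv.2.1], h2⟩
  · obtain ⟨h1, h2⟩ := div_aux hg (hv'.1.trans hv.1.symm) (hu'.2.1.trans hu.2.1.symm) h
    rw [h1, hu.2.1] at h2
    exact Or.inr ⟨by rw [← hv.1, h1, hu.2.1], h2⟩

def collapse (i x : ℕ) : ℕ := if x ≤ i then x else x - 1

lemma collapse_mono (i : ℕ) : Monotone (collapse i) := by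
  intro x y h
  unfold collapse
  split_ifs <;> omega

lemma collapse_or {i x z : ℕ} (h : collapse i x = z) : x = z ∨ x = z + 1 := by
  unfold collapse at h
  split_ifs at h <;> omega

lemma collapse_ne {i j : ℕ} (hj : j ≠ i) : ∃ j₀, ∀ x, collapse i x = j → x = j₀ := by
  refine ⟨if j ≤ i then j else j + 1, fun x h => ?_⟩
  unfold collapse at h
  split_ifs at h ⊢ <;> omega


lemma row_collapse (a b : V → ℕ) (c : V → κ) (g : ℕ → ℕ) (i j : ℕ) (S : Finset ℕ)
    (hS : ∀ x, collapse i x = j → x ∈ S) :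
    (drow a b c (collapse i ∘ g) j).card ≤ ∑ x ∈ S, (drow a b c g x).card := by
  have hsub : drow a b c (collapse i ∘ g) j ⊆ (S.biUnion fun x => drow a b c g x).image
      fun x => (collapse i x.1, collapse i x.2.1, x.2.2) := by
    intro x hx
    simp only [drow, dkeys, mem_filter, mem_image, mem_univ, true_and] at hx
    obtain ⟨⟨v, rfl⟩, hv⟩ := hx
    refine mem_image.2 ⟨dkey a b c g v, ?_, rfl⟩
    rw [mem_biUnion]
    refine ⟨g (b v), hS _ hv, ?_⟩
    simp only [drow, dkeys, mem_filter, mem_image, mem_univ, true_and]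
    exact ⟨⟨v, rfl⟩, rfl⟩
  exact (card_le_card hsub).trans (card_image_le.trans card_biUnion_le)

lemma col_collapse (a b : V → ℕ) (c : V → κ) (g : ℕ → ℕ) (i j : ℕ) (S : Finset ℕ)
    (hS : ∀ x, collapse i x = j → x ∈ S) :
    (dcol a b c (collapse i ∘ g) j).card ≤ ∑ x ∈ S, (dcol a b c g x).card := by
  have hsub : dcol a b c (collapse i ∘ g) j ⊆ (S.biUnion fun x => dcol a b c g x).image
      fun x => (collapse i x.1, collapse i x.2.1, x.2.2) := by
    intro x hx
    simp only [dcol, dkeys, mem_filter, mem_image, mem_univ, true_and] at hx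
    obtain ⟨⟨v, rfl⟩, hv⟩ := hx
    refine mem_image.2 ⟨dkey a b c g v, ?_, rfl⟩
    rw [mem_biUnion]
    refine ⟨g (a v), hS _ hv, ?_⟩
    simp only [dcol, dkeys, mem_filter, mem_image, mem_univ, true_and]
    exact ⟨⟨v, rfl⟩, rfl⟩
  exact (card_le_card hsub).trans (card_image_le.trans card_biUnion_le)

lemma inv_collapse {a b : V → ℕ} {c : V → κ} {d : ℕ} {g : ℕ → ℕ} (hinv : DInv a b c d g) {i : ℕ}
    (hr : (drow a b c g i).card + (drow a b c g (i + 1)).card ≤ d)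
    (hc : (dcol a b c g i).card + (dcol a b c g (i + 1)).card ≤ d) :
    DInv a b c d (collapse i ∘ g) := by
  intro j
  by_cases hj : j = i
  · subst hj
    have hS : ∀ x, collapse j x = j → x ∈ ({j, j + 1} : Finset ℕ) := by
      intro x hx
      simpa using collapse_or hx
    right
    refine ⟨(row_collapse a b c g j j _ hS).trans ?_, (col_collapse a b c g j j _ hS).trans ?_⟩
    · rw [sum_pair (by omega)]; exact hr
    · rw [sum_pair (by omega)]; exact hc
  · obtain ⟨j₀, hj₀⟩ := collapse_ne hj
    have hS : ∀ x, collapse i x = j → x ∈ ({j₀} : Finset ℕ) := by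
      intro x hx
      simpa using hj₀ x hx
    rcases hinv j₀ with h | h
    · left
      intro x y hx hy
      exact h x y (hj₀ _ hx) (hj₀ _ hy)
    · right
      refine ⟨(row_collapse a b c g i j _ hS).trans ?_, (col_collapse a b c g i j _ hS).trans ?_⟩
      · rw [sum_singleton]; exact h.1
      · rw [sum_singleton]; exact h.2

lemma step_red {G : SimpleGraph V} {a b : V → ℕ} {c : V → κ} {F : κ → κ → Prop}
    (hG : ∀ u v, u ≠ v → (G.Adj u v ↔ Xor (a u ≤ b v ∧ a v ≤ b u) (F (c u) (c v))))
    {d : ℕ} {g : ℕ → ℕ} (hg : Monotone g) {i : ℕ} (hinv : DInv a b c d (collapse i ∘ g))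
    {R : Finpartition (univ : Finset V)} (h1 : fibP (dkey a b c g) ≤ R)
    (h2 : R ≤ fibP (dkey a b c (collapse i ∘ g))) {A : Finset V} (hA : A ∈ R.parts) :
    redDegree G R A ≤ 8 * d := by
  classical
  obtain ⟨x, hx⟩ := red_between G _ _ h1 h2 hA
  refine hx.trans ?_
  set g' := collapse i ∘ g with hg'
  have hg'm : Monotone g' := (collapse_mono i).comp hg
  set T := (univ.filter fun y => BadPair G (dkey a b c g') x y).image (dkey a b c g) with hT
  set ψ : ℕ × ℕ × κ → ℕ × ℕ × κ := fun x => (collapse i x.1, collapse i x.2.1, x.2.2) with hψ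
  have hfib : T.card ≤ 4 * (T.image ψ).card := by
    apply card_le_mul_card_image
    intro z _
    have : (T.filter fun y => ψ y = z) ⊆
        ({z.1, z.1 + 1} : Finset ℕ) ×ˢ (({z.2.1, z.2.1 + 1} : Finset ℕ) ×ˢ ({z.2.2} : Finset κ)) := by
      intro y hy
      have hy := (mem_filter.1 hy).2
      simp only [hψ] at hy
      subst hy
      simp only [mem_product, mem_insert, mem_singleton, and_true]
      exact ⟨collapse_or rfl, collapse_or rfl⟩
    refine (card_le_card this).trans ?_
    rw [card_product, card_product, card_singleton]
    have e1 : ({z.1, z.1 + 1} : Finset ℕ).card ≤ 2 := card_le_two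
    have e2 : ({z.2.1, z.2.1 + 1} : Finset ℕ).card ≤ 2 := card_le_two
    nlinarith
  set S1 := if (drow a b c g' (g' (a x))).card ≤ d then drow a b c g' (g' (a x)) else ∅ with hS1
  set S2 := if (dcol a b c g' (g' (b x))).card ≤ d then dcol a b c g' (g' (b x)) else ∅ with hS2
  have hs1 : S1.card ≤ d := by
    rw [hS1]; split_ifs with h
    · exact h
    · simp
  have hs2 : S2.card ≤ d := by
    rw [hS2]; split_ifs with h
    · exact h
    · simp
  have himg : T.image ψ ⊆ S1 ∪ S2 := by
    intro z hz
    simp only [hT, mem_image, mem_filter, mem_univ, true_and] at hz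
    obtain ⟨_, ⟨y, hy, rfl⟩, rfl⟩ := hz
    have hyk : ψ (dkey a b c g y) = dkey a b c g' y := rfl
    rw [hyk, mem_union]
    rcases bad_key hG hg'm hy with ⟨e1, e2⟩ | ⟨e1, e2⟩
    · left
      have := ((hinv (g' (a x))).resolve_left e2).1
      rw [hS1, if_pos this]
      simp only [drow, dkeys, mem_filter, mem_image, mem_univ, true_and]
      exact ⟨⟨y, rfl⟩, e1⟩
    · right
      have := ((hinv (g' (b x))).resolve_left e2).2
      rw [hS2, if_pos this]
      simp only [dcol, dkeys, mem_filter, mem_image, mem_univ, true_and]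
      exact ⟨⟨y, rfl⟩, e1⟩
  have h3 := card_le_card himg
  have h4 := card_union_le S1 S2
  have h5 : T.card ≤ 8 * d := by omega
  refine le_trans (card_le_card ?_) h5
  intro z hz
  rw [@mem_image] at hz
  obtain ⟨y, hy, hyz⟩ := hz
  exact mem_image.2 ⟨y, mem_filter.2 ⟨mem_univ _, (mem_filter.1 hy).2⟩, hyz⟩

lemma exists_merge {a b : V → ℕ} {c : V → κ} {g : ℕ → ℕ} {t D : ℕ} (ht : 1 ≤ t)
    (hs : ∀ v, g (a v) < t + 1 ∧ g (b v) < t + 1)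
    (hK : (dkeys a b c g).card ≤ D * (t + 1)) :
    ∃ i, i < t ∧ (drow a b c g i).card + (drow a b c g (i + 1)).card ≤ 8 * D ∧
      (dcol a b c g i).card + (dcol a b c g (i + 1)).card ≤ 8 * D := by
  by_contra hc
  push Not at hc
  have hrow : (dkeys a b c g).card = ∑ i ∈ range (t + 1), (drow a b c g i).card := by
    apply card_eq_sum_card_fiberwise
    intro x hx
    simp only [dkeys, coe_image, coe_univ, Set.image_univ, Set.mem_range] at hx
    obtain ⟨v, rfl⟩ := hx
    simpa [dkey] using (hs v).2
  have hcol : (dkeys a b c g).card = ∑ i ∈ range (t + 1), (dcol a b c g i).card := by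
    apply card_eq_sum_card_fiberwise
    intro x hx
    simp only [dkeys, coe_image, coe_univ, Set.image_univ, Set.mem_range] at hx
    obtain ⟨v, rfl⟩ := hx
    simpa [dkey] using (hs v).1
  have hge : ∑ i ∈ range t, (8 * D + 1) ≤ ∑ i ∈ range t,
      ((drow a b c g i).card + (drow a b c g (i + 1)).card +
        ((dcol a b c g i).card + (dcol a b c g (i + 1)).card)) := by
    apply sum_le_sum
    intro i hi
    have := hc i (mem_range.1 hi)
    by_contra hh
    have := this (by omega)
    omega
  rw [sum_const, card_range, smul_eq_mul, sum_add_distrib, sum_add_distrib, sum_add_distrib] at hge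
  have r1 := sum_range_succ (fun i => (drow a b c g i).card) t
  have r2 := sum_range_succ' (fun i => (drow a b c g i).card) t
  have r3 := sum_range_succ (fun i => (dcol a b c g i).card) t
  have r4 := sum_range_succ' (fun i => (dcol a b c g i).card) t
  have : t * (8 * D + 1) ≤ 4 * (D * (t + 1)) := by omega
  nlinarith

lemma keys_card [Fintype κ] {a b : V → ℕ} {c : V → κ} {g : ℕ → ℕ} {M : ℕ}
    (h : ∀ c0, ((univ.filter fun v => c v = c0).image fun v => (g (a v), g (b v))).card ≤ M) :
    (dkeys a b c g).card ≤ Fintype.card κ * M := by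
  have : (dkeys a b c g).card = ∑ c0 : κ, ((dkeys a b c g).filter fun x => x.2.2 = c0).card :=
    card_eq_sum_card_fiberwise fun _ _ => by simp
  rw [this]
  refine (sum_le_sum (g := fun _ => M) fun c0 _ => ?_).trans (by simp)
  refine le_trans ?_ (h c0)
  refine card_le_card_of_injOn (fun x => (x.1, x.2.1)) ?_ ?_
  · intro x hx
    simp only [coe_filter, dkeys, mem_image, mem_univ, true_and, Set.mem_ofPred_eq] at hx
    obtain ⟨⟨v, rfl⟩, hv⟩ := hx
    rw [mem_coe]
    exact mem_image.2 ⟨v, mem_filter.2 ⟨mem_univ _, hv⟩, rfl⟩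
  · intro x hx y hy hxy
    simp only [coe_filter, Set.mem_ofPred_eq] at hx hy
    simp only [Prod.mk.injEq] at hxy
    exact Prod.ext hxy.1 (Prod.ext hxy.2 (hx.2.trans hy.2.symm))

theorem tw_of_sparse [Fintype κ] (G : SimpleGraph V) (a b : V → ℕ) (c : V → κ)
    (F : κ → κ → Prop)
    (hG : ∀ u v, u ≠ v → (G.Adj u v ↔ Xor (a u ≤ b v ∧ a v ≤ b u) (F (c u) (c v))))
    (q C : ℕ) (hq : Fintype.card κ ≤ q)
    (hsparse : ∀ g : ℕ → ℕ, Monotone g → ∀ s, (∀ v, g (a v) < s ∧ g (b v) < s) → ∀ c0,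
      ((univ.filter fun v => c v = c0).image fun v => (g (a v), g (b v))).card ≤ C * s) :
    TwinWidthLE G (8 * (8 * (q * C)) + q) := by
  classical
  set D := q * C with hD
  set d := 8 * D with hd
  set w := 8 * d + q with hw
  -- the discrete partition
  have hle0 : fibP (id : V → V) ≤ fibP (dkey a b c id) := fibP_le _ _ (by
    intro u v h
    rw [id, id] at h
    rw [h])
  have hred0 : ∀ R, fibP (id : V → V) ≤ R → R ≤ fibP (dkey a b c id) →
      ∀ A ∈ R.parts, redDegree G R A ≤ w := by
    intro R h1 h2 A hA
    obtain ⟨x, hx⟩ := red_between G _ _ h1 h2 hA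
    refine hx.trans ?_
    have : (univ.filter fun y => BadPair G (dkey a b c id) x y) = ∅ := by
      apply filter_eq_empty_iff.2
      intro y _ hy
      rcases bad_key hG monotone_id hy with ⟨_, h⟩ | ⟨_, h⟩
      · exact h fun z w hz hw => hz.trans hw.symm
      · exact h fun z w hz hw => hz.trans hw.symm
    rw [this]
    simp
  have hreach0 := reach_of_le (G := G) (d := w) _ _ rfl hle0 hred0
  -- merging
  have hdown : ∀ m s : ℕ, 1 ≤ s → ∀ g : ℕ → ℕ, s + m = s + m → Monotone g →
      (∀ v, g (a v) < s + m ∧ g (b v) < s + m) → DInv a b c d g →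
      ∃ g' : ℕ → ℕ, (∀ v, g' (a v) < s ∧ g' (b v) < s) ∧
        Relation.ReflTransGen (TWStep G w) (fibP (dkey a b c g)) (fibP (dkey a b c g')) := by
    intro m
    induction m with
    | zero =>
      intro s _ g _ _ hs _
      exact ⟨g, hs, Relation.ReflTransGen.refl⟩
    | succ m ih =>
      intro s hs1 g _ hg hs hinv
      have hK : (dkeys a b c g).card ≤ D * (s + m + 1) := by
        refine (keys_card (hsparse g hg (s + (m + 1)) hs)).trans ?_
        rw [hD, mul_assoc]
        exact Nat.mul_le_mul_right _ hq
      obtain ⟨i, hi, hr, hc⟩ := exists_merge (t := s + m) (by omega) hs hK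
      have hinv' := inv_collapse hinv hr hc
      have hs' : ∀ v, (collapse i ∘ g) (a v) < s + m ∧ (collapse i ∘ g) (b v) < s + m := by
        intro v
        have := hs v
        simp only [Function.comp, collapse]
        constructor <;> split_ifs <;> omega
      obtain ⟨g', h1, h2⟩ := ih s hs1 (collapse i ∘ g) rfl ((collapse_mono i).comp hg) hs' hinv'
      refine ⟨g', h1, Relation.ReflTransGen.trans ?_ h2⟩
      refine reach_of_le _ _ rfl (fibP_le _ _ ?_) ?_
      · intro u v h
        simp only [dkey, Prod.mk.injEq, Function.comp] at h ⊢
        exact ⟨by rw [h.1], by rw [h.2.1], h.2.2⟩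
      · intro R h1 h2 A hA
        exact (step_red hG hg hinv' h1 h2 hA).trans (by omega)
  obtain ⟨g', hg', hreach1⟩ := hdown (univ.sup a + univ.sup b) 1 le_rfl id rfl monotone_id (by
      intro v
      have h1 : a v ≤ univ.sup a := le_sup (mem_univ v)
      have h2 : b v ≤ univ.sup b := le_sup (mem_univ v)
      simp only [id]
      omega) (fun i => Or.inl fun x y hx hy => hx.trans hy.symm)
  -- the end
  have hreach2 : Relation.ReflTransGen (TWStep G w) (fibP (dkey a b c g'))
      (fibP (fun _ : V => ())) := by
    refine reach_of_le _ _ rfl (fibP_le _ _ fun _ _ _ => rfl) ?_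
    intro R h1 h2 A hA
    obtain ⟨x, hx⟩ := red_between G _ _ h1 h2 hA
    refine hx.trans (le_trans ?_ (hq.trans (Nat.le_add_left q (8 * d))))
    rw [← card_univ]
    refine card_le_card_of_injOn (fun x => x.2.2) (fun _ _ => by simp) ?_
    intro y hy z hz hyz
    simp only [coe_image, Set.mem_image] at hy hz
    obtain ⟨u, _, rfl⟩ := hy
    obtain ⟨v, _, rfl⟩ := hz
    have := hg' u
    have := hg' v
    simp only [dkey] at hyz ⊢
    rw [hyz]
    congr 1
    · omega
    · congr 1
      omega
  refine tw_of_reach (P := fibP (id : V → V)) ?_ (hred0 _ le_rfl hle0) ?_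
    ((hreach0.trans hreach1).trans hreach2)
  · intro A hA
    obtain ⟨x, hx⟩ := (fibP (id : V → V)).nonempty_of_mem_parts hA
    rw [card_eq_one]
    refine ⟨x, ?_⟩
    ext y
    rw [fibP_eq id hA hx, mem_singleton]
    exact eq_comm
  · rw [card_le_one]
    intro A hA B hB
    obtain ⟨x, hx⟩ := (fibP (fun _ : V => ())).nonempty_of_mem_parts hA
    obtain ⟨y, hy⟩ := (fibP (fun _ : V => ())).nonempty_of_mem_parts hB
    refine Finpartition.eq_of_mem_parts _ hA hB hx ?_
    rw [fibP_eq _ hB hy]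

end Division

/-- A hereditary class of `r`-bounded perturbations of interval graphs has
bounded twin-width iff for some permutation `π` it contains no graph
exposing `π`. -/
theorem stmt3 (r : ℕ) (C : ∀ n : ℕ, Set (SimpleGraph (Fin n)))
    (hher : Hereditary C)
    (hpert : ∀ n : ℕ, ∀ G ∈ C n,
      ∃ G₀ : SimpleGraph (Fin n), IsIntervalGraph G₀ ∧ BoundedPerturbOf r G₀ G) :
    (∃ t : ℕ, ∀ n : ℕ, ∀ G ∈ C n, TwinWidthLE G t) ↔
      (∃ p : ℕ, 1 ≤ p ∧ ∃ π : Equiv.Perm (Fin p),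
        ∀ n : ℕ, ∀ G ∈ C n, ¬ Exposes G π) := by
  constructor
  · rintro ⟨t, ht⟩
    refine ⟨((t+1)*(2*(t+1)+1)+1) * ((t+1)*(2*(t+1)+1)+1), Nat.mul_pos (by omega) (by omega),
      gridPerm ((t+1)*(2*(t+1)+1)+1), ?_⟩
    intro n G hG hex
    exact exposes_contra (by omega) (ht n G hG) hex
  · rintro ⟨p, hp, π, hπ⟩
    obtain ⟨C₀, hC₀⟩ := mt_main (6*p+1) (by omega)
    refine ⟨8 * (8 * (2^r * C₀)) + 2^r, ?_⟩
    intro n G hG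
    obtain ⟨G₀, hG₀, L, hL, hLG⟩ := hpert n G hG
    obtain ⟨κ, hκ, c, F, hcard, hF⟩ := perturb_color L G₀
    obtain ⟨a, b, hab, hba, hab', hadj⟩ := interval_normal hG₀
    classical
    have hGX : ∀ u v, u ≠ v → (G.Adj u v ↔ Xor (a u ≤ b v ∧ a v ≤ b u) (F (c u) (c v))) := by
      intro u v huv
      have h1 := hF u v huv
      rw [hadj u v huv] at h1
      rw [hLG]; exact h1
    refine tw_of_sparse G a b c F hGX (2^r) C₀ ?_ ?_
    · rw [hcard]; exact Nat.pow_le_pow_right (by norm_num) hL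
    · intro g hg s hs c0
      apply hC₀ s
      · intro x hx
        obtain ⟨v, _, rfl⟩ := mem_image.1 hx
        exact hs v
      · rintro ⟨P, hPE, hP1, hP2⟩
        have hex : ∀ i j, ∃ v : Fin n, c v = c0 ∧ (g (a v), g (b v)) = P i j := by
          intro i j
          obtain ⟨v, hv, hv2⟩ := mem_image.1 (hPE i j)
          exact ⟨v, (mem_filter.1 hv).2, hv2⟩
        choose vv hvc hvP using hex
        have hva : ∀ i j, g (a (vv i j)) = (P i j).1 := fun i j => by rw [← hvP]
        have hvb : ∀ i j, g (b (vv i j)) = (P i j).2 := fun i j => by rw [← hvP]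
        obtain ⟨m, H, hHG, hHπ⟩ := exposes_of_grid G π a b c F hab hba hab' hGX c0
          (fun i j => vv ⟨min i (6*p), by omega⟩ ⟨min j (6*p), by omega⟩)
          (fun i j _ _ => hvc _ _)
          (by
            intro i i' j j' hi hi' hj hj'
            apply hg.reflect_lt
            rw [hva, hva]
            apply hP1
            rw [Fin.mk_lt_mk]; omega)
          (by
            intro i i' j j' hi hi' hj hj'
            apply hg.reflect_lt
            rw [hvb, hvb]
            apply hP2
            rw [Fin.mk_lt_mk]; omega)
        refine hπ m H ?_ hHπ
        exact hher m n H G hG hHG
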